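/- Let ω = π/2, let Ψ be a closed disk in ℝ² and let p be a point. There exists a deterministic adaptive probing strategy (depending on Ψ and p) that reconstructs every convex polygon O with p ∈ O ⊂ Ψ all of whose interior angles are strictly greater than π/2 using at most 2n − 3 valid π/2-probes, where n is the number of vertices of O. -/

import Mathlib

open Real EuclideanGeometry

noncomputable section

abbrev Plane := EuclideanSpace ℝ (Fin 2)

/-- Counterclockwise rotation of a vector of the plane by angle `θ`. -/
def rot (θ : ℝ) (d : Plane) : Plane :=
  (WithLp.equiv 2 (Fin 2 → ℝ)).symm
    ![Real.cos θ * d 0 - Real.sin θ * d 1, Real.sin θ * d 0 + Real.cos θ * d 1]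

/-- A convex polygon: the convex hull of at least 3 points in strictly convex position;
the points are the vertices. -/
structure ConvexPolygon where
  verts : Finset Plane
  three_le_card : 3 ≤ verts.card
  strictConvexPos : ∀ v ∈ verts, v ∉ convexHull ℝ ((verts : Set Plane) \ {v})

/-- The polygon as a subset of the plane. -/
def ConvexPolygon.body (O : ConvexPolygon) : Set Plane :=
  convexHull ℝ (O.verts : Set Plane)

/-- `x` and `y` are adjacent vertices of `O` (the segment joining them is an edge of `O`). -/
def ConvexPolygon.Adj (O : ConvexPolygon) (x y : Plane) : Prop :=
  x ∈ O.verts ∧ y ∈ O.verts ∧ x ≠ y ∧ segment ℝ x y ⊆ frontier O.body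

/-- The interior angle of `O` at a vertex `v`: the angle `∠ u v w` where `u` and `w` are
the two vertices adjacent to `v`. -/
def ConvexPolygon.intAngle (O : ConvexPolygon) (v : Plane) : ℝ :=
  sSup {θ | ∃ u w, O.Adj v u ∧ O.Adj v w ∧ u ≠ w ∧ θ = ∠ u v w}

/-- A narrow vertex: a vertex whose interior angle is at most `ω`. -/
def ConvexPolygon.IsNarrow (O : ConvexPolygon) (ω : ℝ) (v : Plane) : Prop :=
  v ∈ O.verts ∧ O.intAngle v ≤ ω

/-- `O` is a rectangle: exactly 4 vertices, all interior angles `π/2`. -/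
def ConvexPolygon.IsRectangle (O : ConvexPolygon) : Prop :=
  O.verts.card = 4 ∧ ∀ v ∈ O.verts, O.intAngle v = Real.pi / 2

/-- The `ω`-wedge with apex `q` and first arm direction `d`. -/
def wedge (ω : ℝ) (q d : Plane) : Set Plane :=
  {x | ∃ s t : ℝ, 0 ≤ s ∧ 0 ≤ t ∧ x = q + s • d + t • rot ω d}

/-- The first arm of a wedge: the ray from `q` in direction `d`. -/
def arm1 (q d : Plane) : Set Plane := {x | ∃ t : ℝ, 0 ≤ t ∧ x = q + t • d}

/-- The second arm of an `ω`-wedge: the ray from `q` in direction `rot ω d`. -/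
def arm2 (ω : ℝ) (q d : Plane) : Set Plane := arm1 q (rot ω d)

/-- `(q, d)` is a valid `ω`-probe of `O`: a wedge with unit arm direction containing `O`,
each of whose arms meets `O`. -/
def IsValidProbe (ω : ℝ) (O : ConvexPolygon) (q d : Plane) : Prop :=
  ‖d‖ = 1 ∧ O.body ⊆ wedge ω q d ∧
    (arm1 q d ∩ O.body).Nonempty ∧ (arm2 ω q d ∩ O.body).Nonempty

/-- A directed line: a point together with a unit direction. -/
structure DirLine where
  pt : Plane
  dir : Plane
  norm_dir : ‖dir‖ = 1

/-- Membership of a point in a directed line. -/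
def DirLine.mem (L : DirLine) (x : Plane) : Prop := ∃ t : ℝ, x = L.pt + t • L.dir

/-- A valid `ω`-probe of `O` along the directed line `L`. -/
def IsValidProbeAlong (ω : ℝ) (O : ConvexPolygon) (L : DirLine) (q d : Plane) : Prop :=
  IsValidProbe ω O q d ∧ L.mem q ∧ ∃ t : ℝ, 0 ≤ t ∧ q + t • L.dir ∈ O.body

/-- `p` is the point of `A` closest to `q`. -/
def ClosestOn (q : Plane) (A : Set Plane) (p : Plane) : Prop :=
  p ∈ A ∧ ∀ x ∈ A, dist q p ≤ dist q x


/-- The outcome of a probe: apex, arm direction, and the two closest contact points. -/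
structure Outcome where
  apex : Plane
  dir : Plane
  p₁ : Plane
  p₂ : Plane

/-- `out` is the outcome of a valid `ω`-probe of `O` along `L`: a valid probe together with
the points of each arm ∩ `O` closest to the apex. -/
def IsOutcome (ω : ℝ) (O : ConvexPolygon) (L : DirLine) (out : Outcome) : Prop :=
  IsValidProbeAlong ω O L out.apex out.dir ∧
  ClosestOn out.apex (arm1 out.apex out.dir ∩ O.body) out.p₁ ∧
  ClosestOn out.apex (arm2 ω out.apex out.dir ∩ O.body) out.p₂

/-- The answer to a query: a probe outcome, or `none` (the token "miss"). -/
abbrev Answer := Option Outcome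

/-- A deterministic adaptive probing strategy: maps each finite sequence of answers either to
a next query (a directed line) or to a final output (a convex polygon). -/
abbrev Strategy := List Answer → DirLine ⊕ ConvexPolygon

/-- A correct answer to query `L` against the polygon `O`: the outcome of some valid `ω`-probe
of `O` along `L` if one exists, and "miss" otherwise. -/
def ValidAnswer (ω : ℝ) (O : ConvexPolygon) (L : DirLine) : Answer → Prop
  | none => ¬ ∃ q d, IsValidProbeAlong ω O L q d
  | some out => IsOutcome ω O L out

/-- `l` is (a prefix of) a play of the strategy `S` against `O`: at every proper prefix,
`S` produces a query, and the corresponding entry of `l` is a correct answer to it. -/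
def Consistent (ω : ℝ) (S : Strategy) (O : ConvexPolygon) (l : List Answer) : Prop :=
  ∀ (i : ℕ) (h : i < l.length),
    ∃ L, S (l.take i) = Sum.inl L ∧ ValidAnswer ω O L (l.get ⟨i, h⟩)

/-- `S` reconstructs `O` using at most `k` probes: in every play against `O`, every final
output of `S` is exactly `O`, and `S` produces a final output after at most `k` queries. -/
def Reconstructs (ω : ℝ) (S : Strategy) (O : ConvexPolygon) (k : ℕ) : Prop :=
  (∀ l, Consistent ω S O l → ∀ P, S l = Sum.inr P → P.verts = O.verts) ∧
  (∀ l, Consistent ω S O l → l.length = k → ∃ P, S l = Sum.inr P)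

/-- There is a play of `S` against `O` in which either `S` never outputs `O`
(it plays forever, or outputs a polygon different from `O`), or `S` makes at least `m`
queries before outputting. -/
def BadPlay (ω : ℝ) (S : Strategy) (O : ConvexPolygon) (m : ℕ) : Prop :=
  (∃ f : ℕ → Answer, ∀ k : ℕ, Consistent ω S O (List.ofFn (fun i : Fin k => f i))) ∨
  (∃ l P, Consistent ω S O l ∧ S l = Sum.inr P ∧ (P.verts ≠ O.verts ∨ m ≤ l.length))

/-!
If the angles of `O` are obtuse, the contact points `p₁`, `p₂` of every probe are vertices of `O`
different from the apex. Probe along the directed line through two known vertices `a`, `b`. By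
obtuseness the apex lies strictly behind `a`, so the first contact point either lies strictly to the
right of `ab` or the first arm contains the edge `ab` of `O`. If `ab` is an unverified edge of the
hull of the known vertices, each case gives something new: a vertex outside this hull, or a verified
edge of `O`. Once all edges of the hull are verified, the hull is `O`. As `O` has `n` vertices and
`n` edges, at most `2n` such findings are possible.

What remains is to save three probes at the start. The first probe yields two vertices `A = p₁` and
`B = p₂`; the second is made along `AB` and its first contact point `X` lies strictly to the right
of `AB`; the third is made along `XA` and its first contact point is a fourth vertex. Moreover the
second contact point of each of the last two probes is either a further vertex or shows that the
second arm contains the edge `BA`, respectively `AX`. Hence the first three probes already account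
for six findings, and after `2n - 3` probes all `2n` are known.
-/

section OrientedPlane

open Module

variable {E : Type*} [NormedAddCommGroup E] [InnerProductSpace ℝ E] [Fact (finrank ℝ E = 2)]
  (o : Orientation ℝ E (Fin 2))

local notation "⟪" x ", " y "⟫" => inner ℝ x y
local notation "cross" => o.areaForm
local notation "J" => o.rightAngleRotation

lemma eq_inner_smul_add_areaForm_smul {d : E} (hd : ‖d‖ = 1) (x : E) :
    x = ⟪d, x⟫ • d + cross d x • J d := by
  refine ext_inner_right ℝ fun y => ?_
  rw [inner_add_left, real_inner_smul_left, real_inner_smul_left, o.inner_rightAngleRotation_left,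
    o.inner_mul_inner_add_areaForm_mul_areaForm, hd, one_pow, one_mul]

lemma inner_nonneg_of_mem_quadrant {d x y : E} (hd : ‖d‖ = 1) (hx : 0 ≤ ⟪d, x⟫)
    (hx' : 0 ≤ cross d x) (hy : 0 ≤ ⟪d, y⟫) (hy' : 0 ≤ cross d y) : 0 ≤ ⟪x, y⟫ := by
  have h := o.inner_mul_inner_add_areaForm_mul_areaForm d x y
  rw [hd, one_pow, one_mul] at h
  rw [← h]
  positivity

lemma inner_mul_areaForm_cyclic (n a b c : E) :
    ⟪n, a⟫ * cross b c + ⟪n, b⟫ * cross c a + ⟪n, c⟫ * cross a b = 0 := by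
  rcases eq_or_ne n 0 with rfl | hn
  · simp only [inner_zero_left, zero_mul, add_zero]
  have hn2 : ‖n‖ ^ 2 ≠ 0 := pow_ne_zero 2 (norm_ne_zero_iff.2 hn)
  refine mul_left_cancel₀ hn2 ?_
  linear_combination (-⟪n, a⟫) * o.inner_mul_areaForm_sub n b c
    - ⟪n, b⟫ * o.inner_mul_areaForm_sub n c a - ⟪n, c⟫ * o.inner_mul_areaForm_sub n a b

lemma areaForm_pos_trans {n a b c : E} (ha : 0 < ⟪n, a⟫) (hb : 0 < ⟪n, b⟫) (hc : 0 < ⟪n, c⟫)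
    (hab : 0 < cross a b) (hbc : 0 < cross b c) : 0 < cross a c := by
  have hcyc := inner_mul_areaForm_cyclic o n a b c
  rw [o.areaForm_swap c a] at hcyc
  have : 0 < ⟪n, b⟫ * cross a c := by
    linarith [mul_pos ha hbc, mul_pos hc hab]
  exact pos_of_mul_pos_right this hb.le

lemma areaForm_nonneg_of_slope_le {n a b : E} (ha : 0 < ⟪n, a⟫) (hb : 0 < ⟪n, b⟫)
    (h : cross n a / ⟪n, a⟫ ≤ cross n b / ⟪n, b⟫) : 0 ≤ cross a b := by
  rw [div_le_div_iff₀ ha hb] at h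
  have hn : 0 < ‖n‖ ^ 2 := by
    have : n ≠ 0 := by rintro rfl; simp at ha
    positivity
  have key := o.inner_mul_areaForm_sub n a b
  exact nonneg_of_mul_nonneg_right (by linarith : 0 ≤ ‖n‖ ^ 2 * cross a b) hn

lemma exists_first_ray {K : Finset E} (hK : K.Nonempty) {n : E} (hn : ∀ k ∈ K, 0 < ⟪n, k⟫) :
    ∃ a ∈ K, ∀ k ∈ K, 0 ≤ cross a k := by
  obtain ⟨a, ha, hmin⟩ := K.exists_min_image (fun k => cross n k / ⟪n, k⟫) hK
  exact ⟨a, ha, fun k hk => areaForm_nonneg_of_slope_le o (hn a ha) (hn k hk) (hmin k hk)⟩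

lemma exists_last_ray {K : Finset E} (hK : K.Nonempty) {n : E} (hn : ∀ k ∈ K, 0 < ⟪n, k⟫) :
    ∃ b ∈ K, ∀ k ∈ K, 0 ≤ cross k b := by
  obtain ⟨b, hb, hmax⟩ := K.exists_max_image (fun k => cross n k / ⟪n, k⟫) hK
  exact ⟨b, hb, fun k hk => areaForm_nonneg_of_slope_le o (hn k hk) (hn b hb) (hmax k hk)⟩

lemma areaForm_mul_areaForm_pos_of_obtuse {u w m : E} (huw : ⟪u, w⟫ < 0) (hcr : cross u w ≠ 0)
    (hm : m ≠ 0) (hmu : 0 ≤ ⟪m, u⟫) (hmw : 0 ≤ ⟪m, w⟫) : 0 < cross u w * cross u m := by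
  have hu : 0 < ‖u‖ ^ 2 := by
    have : u ≠ 0 := by rintro rfl; simp at huw
    positivity
  have key := o.inner_mul_inner_add_areaForm_mul_areaForm u w m
  rw [real_inner_comm] at hmu hmw
  have hnonneg : 0 ≤ cross u w * cross u m := by
    nlinarith [mul_nonneg hu.le hmw, mul_nonneg (neg_nonneg.2 huw.le) hmu]
  refine hnonneg.lt_of_ne fun h => ?_
  have hcm : cross u m = 0 := (mul_eq_zero.1 h.symm).resolve_left hcr
  have hum : ⟪u, m⟫ = 0 := by
    nlinarith [mul_nonneg hu.le hmw, mul_nonneg (neg_nonneg.2 huw.le) hmu]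
  have hsq := o.inner_sq_add_areaForm_sq u m
  rw [hum, hcm] at hsq
  have hm2 : 0 < ‖m‖ ^ 2 := pow_pos (norm_pos_iff.2 hm) 2
  linarith [mul_pos hu hm2]

lemma inner_pos_of_obtuse {u w m n : E} (huw : ⟪u, w⟫ < 0) (hcr : cross u w ≠ 0)
    (hm : m ≠ 0) (hmu : 0 ≤ ⟪m, u⟫) (hmw : 0 ≤ ⟪m, w⟫)
    (hn : n ≠ 0) (hnu : 0 ≤ ⟪n, u⟫) (hnw : 0 ≤ ⟪n, w⟫) : 0 < ⟪m, n⟫ := by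
  have hcm := areaForm_mul_areaForm_pos_of_obtuse o huw hcr hm hmu hmw
  have hcn := areaForm_mul_areaForm_pos_of_obtuse o huw hcr hn hnu hnw
  have hmn : 0 < cross u m * cross u n := by
    have : 0 < cross u w ^ 2 * (cross u m * cross u n) := by nlinarith [mul_pos hcm hcn]
    exact pos_of_mul_pos_right this (sq_nonneg _)
  rw [real_inner_comm] at hmu hnu
  have key := o.inner_mul_inner_add_areaForm_mul_areaForm u m n
  have : 0 < ‖u‖ ^ 2 * ⟪m, n⟫ := by linarith [mul_nonneg hmu hnu]
  exact pos_of_mul_pos_right this (sq_nonneg _)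

end OrientedPlane

section Plane

open scoped EuclideanSpace
open Module

/-- The standard orientation of the plane, through which areas, signs of turns and the quarter turn
are expressed. -/
def planeOrientation : Orientation ℝ Plane (Fin 2) :=
  (EuclideanSpace.basisFun (Fin 2) ℝ).toBasis.orientation

local notation "⟪" x ", " y "⟫" => inner ℝ x y
local notation "cross" => Orientation.areaForm planeOrientation
local notation "J" => Orientation.rightAngleRotation planeOrientation

lemma cross_eq (x y : Plane) : cross x y = x 0 * y 1 - x 1 * y 0 := by
  rw [Orientation.areaForm_to_volumeForm,
    planeOrientation.volumeForm_robust (EuclideanSpace.basisFun (Fin 2) ℝ) rfl, Basis.det_apply,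
    Matrix.det_fin_two]
  simp only [Basis.toMatrix_apply, Matrix.cons_val_zero, Matrix.cons_val_one,
    Matrix.cons_val_fin_one, OrthonormalBasis.coe_toBasis_repr_apply,
    EuclideanSpace.basisFun_repr]
  ring

lemma rot_pi_div_two (d : Plane) : rot (π / 2) d = J d := by
  refine ext_inner_right ℝ fun y => ?_
  rw [planeOrientation.inner_rightAngleRotation_left, cross_eq]
  simp only [rot, cos_pi_div_two, sin_pi_div_two, zero_mul, one_mul, zero_sub, add_zero, mul_neg,
    WithLp.equiv_symm_apply, PiLp.inner_apply, RCLike.inner_apply, ringHom_apply,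
    Fin.sum_univ_two, Matrix.cons_val_zero, Matrix.cons_val_one, Matrix.cons_val_fin_one]
  ring

/-- Twice the signed area of the triangle `a b c`: positive when `c` lies strictly to the left of
the line directed from `a` to `b`. -/
def orient (a b c : Plane) : ℝ := cross (b - a) (c - a)

lemma orient_rotate (a b c : Plane) : orient b c a = orient a b c := by
  simp only [orient, cross_eq, PiLp.sub_apply]
  ring

lemma orient_swap (a b c : Plane) : orient b a c = -orient a b c := by
  simp only [orient, cross_eq, PiLp.sub_apply]
  ring

lemma orient_swap_right (a b c : Plane) : orient a b c = -orient a c b :=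
  planeOrientation.areaForm_swap _ _

lemma orient_self_right (a b : Plane) : orient a b b = 0 :=
  planeOrientation.areaForm_apply_self _

lemma orient_self_left (a b : Plane) : orient a b a = 0 := by
  rw [orient, sub_self, map_zero]

lemma norm_quarter_turn {d : Plane} (hd : ‖d‖ = 1) : ‖J d‖ = 1 := by
  rw [LinearIsometryEquiv.norm_map, hd]

lemma mem_arm1_iff {q d x : Plane} (hd : ‖d‖ = 1) :
    x ∈ arm1 q d ↔ 0 ≤ ⟪d, x - q⟫ ∧ cross d (x - q) = 0 := by
  constructor
  · rintro ⟨t, ht, rfl⟩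
    rw [add_sub_cancel_left, real_inner_smul_right, real_inner_self_eq_norm_sq, hd, map_smul,
      planeOrientation.areaForm_apply_self]
    exact ⟨by simpa using ht, smul_zero t⟩
  · rintro ⟨hinner, hcross⟩
    refine ⟨_, hinner, ?_⟩
    have h := eq_inner_smul_add_areaForm_smul planeOrientation hd (x - q)
    rwa [hcross, zero_smul, add_zero, sub_eq_iff_eq_add'] at h

lemma mem_wedge_pi_div_two_iff {q d x : Plane} (hd : ‖d‖ = 1) :
    x ∈ wedge (π / 2) q d ↔ 0 ≤ ⟪d, x - q⟫ ∧ 0 ≤ cross d (x - q) := by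
  simp only [wedge, rot_pi_div_two, Set.mem_ofPred_eq]
  constructor
  · rintro ⟨s, t, hs, ht, rfl⟩
    rw [add_assoc, add_sub_cancel_left, inner_add_right, map_add, real_inner_smul_right,
      real_inner_smul_right, map_smul, map_smul, real_inner_self_eq_norm_sq,
      planeOrientation.inner_rightAngleRotation_right, planeOrientation.areaForm_apply_self,
      planeOrientation.areaForm_rightAngleRotation_right, real_inner_self_eq_norm_sq, hd]
    simpa using ⟨hs, ht⟩
  · rintro ⟨hinner, hcross⟩
    refine ⟨_, _, hinner, hcross, ?_⟩
    rw [add_assoc, ← eq_inner_smul_add_areaForm_smul planeOrientation hd, add_sub_cancel]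

lemma arm2_pi_div_two (q d : Plane) : arm2 (π / 2) q d = arm1 q (J d) := by
  rw [arm2, rot_pi_div_two]

lemma inner_pos_of_areaForm_eq_zero {n x y : Plane} (hx : 0 < ⟪n, x⟫) (hy : 0 < ⟪n, y⟫)
    (hxy : cross x y = 0) : 0 < ⟪x, y⟫ := by
  have key := planeOrientation.inner_mul_inner_add_areaForm_mul_areaForm x n y
  rw [hxy, mul_zero, add_zero, real_inner_comm n x] at key
  have hx0 : x ≠ 0 := by rintro rfl; simp at hx
  have : 0 < ⟪n, x⟫ * ⟪x, y⟫ := by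
    rw [key]
    positivity
  exact pos_of_mul_pos_right this hx.le

/-- The edges of the convex hull of a finite set `K`, directed so that `K` lies on their left. -/
def hullEdges (K : Finset Plane) : Finset (Plane × Plane) :=
  K.offDiag.filter fun e => ∀ k ∈ K, 0 ≤ orient e.1 e.2 k

lemma mem_hullEdges {K : Finset Plane} {a b : Plane} :
    (a, b) ∈ hullEdges K ↔ (a ∈ K ∧ b ∈ K ∧ a ≠ b) ∧ ∀ k ∈ K, 0 ≤ orient a b k := by
  rw [hullEdges, Finset.mem_filter, Finset.mem_offDiag]

namespace ConvexPolygon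

variable {O : ConvexPolygon}

lemma mem_body_of_mem_verts {v : Plane} (hv : v ∈ O.verts) : v ∈ O.body :=
  subset_convexHull ℝ _ hv

lemma verts_nonempty (O : ConvexPolygon) : O.verts.Nonempty := by
  rw [← Finset.card_pos]
  exact lt_of_lt_of_le three_pos O.three_le_card

lemma le_inner_of_mem_body {n : Plane} {c : ℝ} (h : ∀ v ∈ O.verts, c ≤ ⟪n, v⟫) {x : Plane}
    (hx : x ∈ O.body) : c ≤ ⟪n, x⟫ :=
  convexHull_min h (convex_halfSpace_ge (innerₛₗ ℝ n).isLinear c) hx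

lemma exists_strict_support {v : Plane} (hv : v ∈ O.verts) :
    ∃ n : Plane, ∀ x ∈ O.verts, x ≠ v → 0 < ⟪n, x - v⟫ := by
  have hclosed : IsClosed (convexHull ℝ ((O.verts : Set Plane) \ {v})) :=
    (O.verts.finite_toSet.subset Set.sdiff_subset).isClosed_convexHull ℝ
  obtain ⟨f, c, hfv, hf⟩ := geometric_hahn_banach_point_closed (convex_convexHull ℝ _) hclosed
    (O.strictConvexPos v hv)
  refine ⟨(InnerProductSpace.toDual ℝ Plane).symm f, fun x hx hxv => ?_⟩
  rw [InnerProductSpace.toDual_symm_apply, map_sub, sub_pos]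
  exact hfv.trans (hf x (subset_convexHull ℝ _ ⟨hx, hxv⟩))

lemma orient_ne_zero {a b c : Plane} (ha : a ∈ O.verts) (hb : b ∈ O.verts) (hc : c ∈ O.verts)
    (hab : a ≠ b) (hac : a ≠ c) (hbc : b ≠ c) : orient a b c ≠ 0 := by
  have inner_pos : ∀ {u v w : Plane}, u ∈ O.verts → v ∈ O.verts → w ∈ O.verts → v ≠ u → w ≠ u →
      orient u v w = 0 → 0 < ⟪v - u, w - u⟫ := by
    intro u v w hu hv hw hvu hwu h
    obtain ⟨n, hn⟩ := exists_strict_support hu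
    exact inner_pos_of_areaForm_eq_zero (hn v hv hvu) (hn w hw hwu) h
  intro h
  have hA := inner_pos ha hb hc hab.symm hac.symm h
  have hB := inner_pos hb hc ha hbc.symm hab (by rw [orient_rotate, h])
  have hC := inner_pos hc ha hb hac hbc (by rw [← orient_rotate, h])
  have hsq := planeOrientation.inner_sq_add_areaForm_sq (b - a) (c - a)
  rw [show cross (b - a) (c - a) = 0 from h] at hsq
  rw [show c - b = (c - a) - (b - a) by abel, show a - b = -(b - a) by abel, inner_neg_right,
    inner_sub_left, real_inner_self_eq_norm_sq, real_inner_comm] at hB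
  rw [show a - c = -(c - a) by abel, show b - c = (b - a) - (c - a) by abel, inner_neg_left,
    inner_sub_right, real_inner_self_eq_norm_sq, real_inner_comm] at hC
  nlinarith

lemma orient_pos_trans {v a b c : Plane} (hv : v ∈ O.verts) (ha : a ∈ O.verts) (hb : b ∈ O.verts)
    (hc : c ∈ O.verts) (hab : 0 < orient v a b) (hbc : 0 < orient v b c) (hcv : c ≠ v) :
    0 < orient v a c := by
  obtain ⟨n, hn⟩ := exists_strict_support hv
  have hav : a ≠ v := by
    rintro rfl
    rw [orient, sub_self, map_zero] at hab
    exact lt_irrefl _ hab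
  have hbv : b ≠ v := by
    rintro rfl
    rw [orient_self_left] at hab
    exact lt_irrefl _ hab
  exact areaForm_pos_trans planeOrientation (hn a ha hav) (hn b hb hbv) (hn c hc hcv) hab hbc

lemma card_hullEdges_verts_le (O : ConvexPolygon) : (hullEdges O.verts).card ≤ O.verts.card := by
  refine Finset.card_le_card_of_injOn Prod.fst
    (fun ⟨a, b⟩ hab => (mem_hullEdges.1 hab).1.1) ?_
  rintro ⟨a, b⟩ hab ⟨a', b'⟩ hab' rfl
  obtain ⟨⟨ha, hb, hne⟩, hleft⟩ := mem_hullEdges.1 hab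
  obtain ⟨⟨-, hb', hne'⟩, hleft'⟩ := mem_hullEdges.1 hab'
  by_contra h
  have hbb' : b ≠ b' := fun e => h (by rw [e])
  have hflat : orient a b b' = 0 := by
    refine le_antisymm ?_ (hleft b' hb')
    rw [orient_swap_right, neg_nonpos]
    exact hleft' b hb
  exact orient_ne_zero ha hb hb' hne hne' hbb' hflat

lemma exists_hullEdge_orient_neg {K : Finset Plane} (hK : K ⊆ O.verts) (hKnt : K.Nontrivial)
    {v : Plane} (hv : v ∈ O.verts) (hvK : v ∉ K) :
    ∃ a b, (a, b) ∈ hullEdges K ∧ orient a b v < 0 := by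
  classical
  obtain ⟨n, hn⟩ := exists_strict_support hv
  obtain ⟨_, ha, ha_last⟩ := exists_last_ray planeOrientation (hKnt.nonempty.image (· - v))
    (n := n) (by
      simp only [Finset.forall_mem_image]
      exact fun k hk => hn k (hK hk) (ne_of_mem_of_not_mem hk hvK))
  obtain ⟨a, haK, rfl⟩ := Finset.mem_image.1 ha
  obtain ⟨m, hm⟩ := exists_strict_support (hK haK)
  obtain ⟨_, hb, hb_first⟩ := exists_first_ray planeOrientation
    ((hKnt.erase_nonempty (a := a)).image (· - a)) (n := m) (by
      simp only [Finset.forall_mem_image, Finset.mem_erase]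
      exact fun k hk => hm k (hK hk.2) hk.1)
  obtain ⟨b, hbK, rfl⟩ := Finset.mem_image.1 hb
  rw [Finset.mem_erase] at hbK
  simp only [Finset.forall_mem_image] at ha_last hb_first
  refine ⟨a, b, mem_hullEdges.2 ⟨⟨haK, hbK.2, hbK.1.symm⟩, fun k hk => ?_⟩, ?_⟩
  · rcases eq_or_ne k a with rfl | hka
    · exact (orient_self_left k b).ge
    · exact hb_first (Finset.mem_erase.2 ⟨hka, hk⟩)
  · have hle : orient v b a ≥ 0 := ha_last hbK.2
    have hne := orient_ne_zero hv (hK hbK.2) (hK haK) (ne_of_mem_of_not_mem hbK.2 hvK).symm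
      (ne_of_mem_of_not_mem haK hvK).symm hbK.1
    rw [← orient_rotate, orient_swap]
    exact neg_neg_of_pos (hle.lt_of_ne' hne)

lemma eq_verts_of_hullEdges_subset {K : Finset Plane} (hK : K ⊆ O.verts) (hKnt : K.Nontrivial)
    (h : hullEdges K ⊆ hullEdges O.verts) : K = O.verts := by
  refine hK.antisymm fun v hv => ?_
  by_contra hvK
  obtain ⟨a, b, hab, hneg⟩ := exists_hullEdge_orient_neg hK hKnt hv hvK
  exact hneg.not_ge ((mem_hullEdges.1 (h hab)).2 v hv)

/-- Every vertex sees two others under an obtuse angle. This is all that is used of the interior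
angles being larger than a right angle. -/
def IsObtuse (O : ConvexPolygon) : Prop :=
  ∀ v ∈ O.verts, ∃ u ∈ O.verts, ∃ w ∈ O.verts, ⟪u - v, w - v⟫ < 0

lemma isObtuse_of_pi_div_two_lt_intAngle (h : ∀ v ∈ O.verts, π / 2 < O.intAngle v) :
    O.IsObtuse := by
  intro v hv
  by_contra! hacute
  refine (h v hv).not_ge (Real.sSup_le ?_ (by positivity))
  rintro _ ⟨u, w, hu, hw, -, rfl⟩
  refine Real.arccos_le_pi_div_two.2 (div_nonneg ?_ (by positivity))
  exact hacute u hu.2.1 w hw.2.1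

lemma IsObtuse.inner_pos (hO : O.IsObtuse) {v m n : Plane} (hv : v ∈ O.verts)
    (hm : m ≠ 0) (hn : n ≠ 0) (hmv : ∀ x ∈ O.verts, 0 ≤ ⟪m, x - v⟫)
    (hnv : ∀ x ∈ O.verts, 0 ≤ ⟪n, x - v⟫) : 0 < ⟪m, n⟫ := by
  obtain ⟨u, hu, w, hw, huw⟩ := hO v hv
  have hvu : v ≠ u := by rintro rfl; simp at huw
  have hvw : v ≠ w := by rintro rfl; simp at huw
  have hne : u ≠ w := by
    rintro rfl
    exact huw.not_ge real_inner_self_nonneg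
  exact inner_pos_of_obtuse planeOrientation huw (orient_ne_zero hv hu hw hvu hvw hne)
    hm (hmv u hu) (hmv w hw) hn (hnv u hu) (hnv w hw)

/-- The support function of the polygon in its inner-normal form: the least value on `O` of the
linear functional `⟪d, ·⟫`. -/
def support (O : ConvexPolygon) (d : Plane) : ℝ :=
  O.verts.inf' O.verts_nonempty fun v => ⟪d, v⟫

lemma support_le_inner (d : Plane) {x : Plane} (hx : x ∈ O.body) : O.support d ≤ ⟪d, x⟫ :=
  le_inner_of_mem_body (fun _ hv => Finset.inf'_le _ hv) hx

lemma exists_inner_eq_support (O : ConvexPolygon) (d : Plane) :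
    ∃ x ∈ O.body, ⟪d, x⟫ = O.support d := by
  obtain ⟨v, hv, h⟩ := O.verts.exists_mem_eq_inf' O.verts_nonempty fun v => ⟪d, v⟫
  exact ⟨v, mem_body_of_mem_verts hv, h.symm⟩

lemma continuous_support (O : ConvexPolygon) : Continuous O.support :=
  Continuous.finset_inf'_apply _ fun _ _ => by fun_prop

/-- The apex of the right-angle wedge around `O` whose first arm has direction `d`. -/
def apexAt (O : ConvexPolygon) (d : Plane) : Plane :=
  O.support d • d + O.support (J d) • J d

lemma inner_apexAt {d : Plane} (hd : ‖d‖ = 1) : ⟪d, O.apexAt d⟫ = O.support d := by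
  rw [apexAt, inner_add_right, real_inner_smul_right, real_inner_smul_right,
    real_inner_self_eq_norm_sq, hd, planeOrientation.inner_rightAngleRotation_right,
    planeOrientation.areaForm_apply_self]
  ring

lemma areaForm_apexAt {d : Plane} (hd : ‖d‖ = 1) : cross d (O.apexAt d) = O.support (J d) := by
  rw [apexAt, map_add, map_smul, map_smul, planeOrientation.areaForm_apply_self,
    planeOrientation.areaForm_rightAngleRotation_right, real_inner_self_eq_norm_sq, hd]
  simp

lemma isValidProbe_apexAt {d : Plane} (hd : ‖d‖ = 1) :
    IsValidProbe (π / 2) O (O.apexAt d) d := by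
  have inner_nonneg : ∀ x ∈ O.body, 0 ≤ ⟪d, x - O.apexAt d⟫ := fun x hx => by
    rw [inner_sub_right, inner_apexAt hd, sub_nonneg]
    exact support_le_inner d hx
  have cross_nonneg : ∀ x ∈ O.body, 0 ≤ cross d (x - O.apexAt d) := fun x hx => by
    rw [map_sub, areaForm_apexAt hd, sub_nonneg, ← planeOrientation.inner_rightAngleRotation_left]
    exact support_le_inner (J d) hx
  refine ⟨hd, fun x hx => (mem_wedge_pi_div_two_iff hd).2 ⟨inner_nonneg x hx, cross_nonneg x hx⟩,
    ?_, ?_⟩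
  · obtain ⟨x, hx, h⟩ := O.exists_inner_eq_support (J d)
    refine ⟨x, (mem_arm1_iff hd).2 ⟨inner_nonneg x hx, ?_⟩, hx⟩
    rw [map_sub, areaForm_apexAt hd, ← h, planeOrientation.inner_rightAngleRotation_left, sub_self]
  · obtain ⟨x, hx, h⟩ := O.exists_inner_eq_support d
    refine ⟨x, ?_, hx⟩
    rw [arm2_pi_div_two, mem_arm1_iff (norm_quarter_turn hd),
      planeOrientation.inner_rightAngleRotation_left,
      planeOrientation.areaForm_rightAngleRotation_left, inner_sub_right, inner_apexAt hd, h,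
      sub_self, neg_zero]
    exact ⟨cross_nonneg x hx, rfl⟩

/-- Turning the first arm from `u` to `-J u` moves the apex from one side of the line through `x`
with direction `u` to the other side. -/
lemma exists_apexAt_mem_line {u x : Plane} (hu : ‖u‖ = 1) (hx : x ∈ O.body) :
    ∃ d : Plane, ‖d‖ = 1 ∧ 0 ≤ ⟪d, u⟫ ∧ 0 ≤ cross d u ∧ cross u (x - O.apexAt d) = 0 := by
  let dirAt : ℝ → Plane := fun t => cos t • u - sin t • J u
  have norm_dirAt : ∀ t, ‖dirAt t‖ = 1 := fun t => by
    have h := planeOrientation.rotation_apply (-t : ℝ) u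
    rw [Real.Angle.cos_coe, Real.Angle.sin_coe, cos_neg, sin_neg, neg_smul, ← sub_eq_add_neg] at h
    rw [← hu, ← LinearIsometryEquiv.norm_map (planeOrientation.rotation (-t : ℝ)) u, h]
  let f : ℝ → ℝ := fun t => cross u (x - O.apexAt (dirAt t))
  have hf : Continuous f := by
    have := O.continuous_support
    simp only [f, apexAt, dirAt, ← planeOrientation.inner_rightAngleRotation_left]
    fun_prop
  have hf0 : 0 ≤ f 0 := by
    have h := support_le_inner (J u) hx
    rw [planeOrientation.inner_rightAngleRotation_left] at h
    simp only [f, dirAt, cos_zero, sin_zero, one_smul, zero_smul, sub_zero, map_sub]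
    rwa [areaForm_apexAt hu, sub_nonneg]
  have hf1 : f (π / 2) ≤ 0 := by
    have h := support_le_inner (-J u) hx
    have hapex := inner_apexAt (O := O) (d := -J u) (by rw [norm_neg, norm_quarter_turn hu])
    simp only [f, dirAt, cos_pi_div_two, sin_pi_div_two, one_smul, zero_smul, zero_sub, map_sub]
    rw [inner_neg_left, planeOrientation.inner_rightAngleRotation_left] at h hapex
    linarith
  obtain ⟨t, ⟨ht0, ht1⟩, hft⟩ :=
    intermediate_value_Icc' (by positivity) hf.continuousOn ⟨hf1, hf0⟩
  refine ⟨dirAt t, norm_dirAt t, ?_, ?_, hft⟩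
  · have h : ⟪dirAt t, u⟫ = cos t := by
      simp [dirAt, inner_sub_left, real_inner_smul_left, hu]
    rw [h]
    exact cos_nonneg_of_mem_Icc ⟨by linarith, ht1⟩
  · have h : cross (dirAt t) u = sin t := by
      simp [dirAt, hu]
    rw [h]
    exact sin_nonneg_of_nonneg_of_le_pi ht0 (by linarith [pi_pos])

lemma exists_isValidProbeAlong {L : DirLine} (hL : L.pt ∈ O.body) :
    ∃ q d, IsValidProbeAlong (π / 2) O L q d := by
  obtain ⟨d, hd, hdu, hdu', hline⟩ := exists_apexAt_mem_line L.norm_dir hL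
  have hvalid := isValidProbe_apexAt (O := O) hd
  obtain ⟨hinner, hcross⟩ := (mem_wedge_pi_div_two_iff hd).1 (hvalid.2.1 hL)
  have hforward := inner_nonneg_of_mem_quadrant planeOrientation hd hdu hdu' hinner hcross
  obtain ⟨t, ht, hpt⟩ := (mem_arm1_iff L.norm_dir).2 ⟨hforward, hline⟩
  exact ⟨O.apexAt d, d, hvalid, ⟨-t, by rw [hpt]; module⟩, t, ht, hpt ▸ hL⟩

lemma mem_verts_of_closestOn_arm1 {q d n p : Plane} (hd : ‖d‖ = 1)
    (hn : ∀ x ∈ O.body, 0 ≤ ⟪n, x - q⟫) (harm : ∀ x ∈ O.body, x ∈ arm1 q d ↔ ⟪n, x - q⟫ = 0)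
    (hp : ClosestOn q (arm1 q d ∩ O.body) p) : p ∈ O.verts := by
  have hface : IsExposed ℝ O.body (arm1 q d ∩ O.body) := fun _ => by
    refine ⟨innerSL ℝ (-n), Set.ext fun x => ⟨fun hx => ⟨hx.2, fun y hy => ?_⟩, fun hx => ?_⟩⟩
    · have hx0 := (harm x hx.2).1 hx.1
      have hy0 := hn y hy
      rw [inner_sub_right] at hx0 hy0
      simp only [innerSL_apply_apply, inner_neg_left]
      linarith
    · have hp0 := (harm p hp.1.2).1 hp.1.1
      have hxp := hx.2 p hp.1.2
      simp only [innerSL_apply_apply, inner_neg_left] at hxp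
      refine ⟨(harm x hx.1).2 (le_antisymm ?_ (hn x hx.1)), hx.1⟩
      rw [inner_sub_right] at hp0 ⊢
      linarith
  have dist_ray : ∀ s : ℝ, 0 ≤ s → dist q (q + s • d) = s := fun s hs => by
    rw [dist_self_add_right, norm_smul, hd, mul_one, Real.norm_of_nonneg hs]
  have hexposed : p ∈ (arm1 q d ∩ O.body).exposedPoints ℝ := by
    refine ⟨hp.1, innerSL ℝ (-d), fun y hy => ?_⟩
    obtain ⟨r, hr, rfl⟩ := hp.1.1
    obtain ⟨s, hs, rfl⟩ := hy.1
    have hrs := hp.2 _ hy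
    rw [dist_ray r hr, dist_ray s hs] at hrs
    simp only [innerSL_apply_apply, inner_neg_left, inner_add_right,
      real_inner_smul_right, real_inner_self_eq_norm_sq, hd]
    exact ⟨by linarith, fun h => by rw [show s = r by linarith]⟩
  exact extremePoints_convexHull_subset (hface.isExtreme.extremePoints_subset_extremePoints
    (exposedPoints_subset_extremePoints hexposed))

end ConvexPolygon

/-- The facts used about the outcome of a right-angle probe of an obtuse polygon. They do not
mention the query, and the contact points `p₁`, `p₂` are vertices different from the apex. -/
structure IsRightAngleProbe (O : ConvexPolygon) (o : Outcome) : Prop where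
  norm_dir : ‖o.dir‖ = 1
  inner_nonneg : ∀ x ∈ O.body, 0 ≤ ⟪o.dir, x - o.apex⟫
  cross_nonneg : ∀ x ∈ O.body, 0 ≤ cross o.dir (x - o.apex)
  apex_notMem : o.apex ∉ O.body
  p₁_mem : o.p₁ ∈ O.verts
  p₂_mem : o.p₂ ∈ O.verts
  exists_p₁_eq : ∃ s : ℝ, 0 < s ∧ o.p₁ = o.apex + s • o.dir
  exists_p₂_eq : ∃ t : ℝ, 0 < t ∧ o.p₂ = o.apex + t • J o.dir

section Probes

variable {O : ConvexPolygon} {L : DirLine} {o o' : Outcome} {q d a b x : Plane}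

lemma IsValidProbe.inner_nonneg (h : IsValidProbe (π / 2) O q d) (hx : x ∈ O.body) :
    0 ≤ ⟪d, x - q⟫ :=
  ((mem_wedge_pi_div_two_iff h.1).1 (h.2.1 hx)).1

lemma IsValidProbe.cross_nonneg (h : IsValidProbe (π / 2) O q d) (hx : x ∈ O.body) :
    0 ≤ cross d (x - q) :=
  ((mem_wedge_pi_div_two_iff h.1).1 (h.2.1 hx)).2

lemma IsValidProbe.apex_notMem_verts (h : IsValidProbe (π / 2) O q d) (hO : O.IsObtuse) :
    q ∉ O.verts := fun hq => by
  obtain ⟨u, hu, w, hw, huw⟩ := hO _ hq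
  have hu := O.mem_body_of_mem_verts hu
  have hw := O.mem_body_of_mem_verts hw
  exact huw.not_ge (inner_nonneg_of_mem_quadrant planeOrientation h.1 (h.inner_nonneg hu)
    (h.cross_nonneg hu) (h.inner_nonneg hw) (h.cross_nonneg hw))

lemma IsOutcome.p₁_mem_verts (h : IsOutcome (π / 2) O L o) : o.p₁ ∈ O.verts := by
  obtain ⟨⟨hvalid, -⟩, hp₁, -⟩ := h
  refine O.mem_verts_of_closestOn_arm1 (n := J o.dir) hvalid.1 (fun x hx => ?_) (fun x hx => ?_) hp₁
  · rw [planeOrientation.inner_rightAngleRotation_left]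
    exact hvalid.cross_nonneg hx
  · rw [mem_arm1_iff hvalid.1, and_iff_right (hvalid.inner_nonneg hx),
      planeOrientation.inner_rightAngleRotation_left]

lemma IsOutcome.p₂_mem_verts (h : IsOutcome (π / 2) O L o) : o.p₂ ∈ O.verts := by
  obtain ⟨⟨hvalid, -⟩, -, hp₂⟩ := h
  have hJ := norm_quarter_turn hvalid.1
  rw [arm2_pi_div_two] at hp₂
  refine O.mem_verts_of_closestOn_arm1 hJ (fun x => hvalid.inner_nonneg) (fun x hx => ?_) hp₂
  rw [mem_arm1_iff hJ, planeOrientation.inner_rightAngleRotation_left,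
    and_iff_right (hvalid.cross_nonneg hx), planeOrientation.areaForm_rightAngleRotation_left,
    neg_eq_zero]

lemma IsOutcome.isRightAngleProbe (h : IsOutcome (π / 2) O L o) (hO : O.IsObtuse) :
    IsRightAngleProbe O o := by
  have p₁_mem := h.p₁_mem_verts
  have p₂_mem := h.p₂_mem_verts
  obtain ⟨⟨hvalid, -⟩, hp₁, hp₂⟩ := h
  have apex_notMem_verts := hvalid.apex_notMem_verts hO
  have apex_notMem : o.apex ∉ O.body := fun hapex => by
    have h := hp₁.2 o.apex ⟨⟨0, le_rfl, by simp⟩, hapex⟩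
    rw [dist_self, dist_le_zero] at h
    exact apex_notMem_verts (h ▸ p₁_mem)
  have exists_pos : ∀ {d p : Plane}, p ∈ O.verts → p ∈ arm1 o.apex d →
      ∃ s : ℝ, 0 < s ∧ p = o.apex + s • d := by
    rintro d p hp ⟨s, hs, rfl⟩
    refine ⟨s, hs.lt_of_ne ?_, rfl⟩
    rintro rfl
    rw [zero_smul, add_zero] at hp
    exact apex_notMem_verts hp
  rw [arm2_pi_div_two] at hp₂
  exact ⟨hvalid.1, fun x => hvalid.inner_nonneg, fun x => hvalid.cross_nonneg, apex_notMem,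
    p₁_mem, p₂_mem, exists_pos p₁_mem hp₁.1.1, exists_pos p₂_mem hp₂.1.1⟩

/-- The line directed from `a` to `b`; when `a = b` it gets an arbitrary direction. -/
def lineThrough (a b : Plane) : DirLine where
  pt := a
  dir := if a = b then EuclideanSpace.single 0 1 else ‖b - a‖⁻¹ • (b - a)
  norm_dir := by
    split_ifs with h
    · simp
    · exact norm_smul_inv_norm (𝕜 := ℝ) (sub_ne_zero.2 (Ne.symm h))

lemma lineThrough_dir (hab : a ≠ b) : (lineThrough a b).dir = ‖b - a‖⁻¹ • (b - a) :=
  if_neg hab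

namespace Outcome

/-- The apex lies on the line through `a` and `b`, strictly behind `a` as seen from `b`, and from
there on this line runs inside the wedge. -/
structure Approaches (o : Outcome) (a b : Plane) : Prop where
  exists_eq : ∃ σ : ℝ, 0 < σ ∧ a = o.apex + σ • (b - a)
  inner_nonneg : 0 ≤ ⟪o.dir, b - a⟫
  cross_nonneg : 0 ≤ cross o.dir (b - a)

/-- The segment from `a` to `b` lies on the line of an arm of the probe and is directed so that the
wedge lies on its left: along the first arm away from the apex, or along the second arm towards the
apex. -/
def Flush (o : Outcome) (a b : Plane) : Prop :=
  ∃ u, (u = o.dir ∨ u = -J o.dir) ∧ cross u (a - o.apex) = 0 ∧ ∃ r : ℝ, 0 < r ∧ b - a = r • u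

end Outcome

lemma IsOutcome.approaches (h : IsOutcome (π / 2) O (lineThrough a b) o) (hO : O.IsObtuse)
    (ha : a ∈ O.body) (hab : a ≠ b) : o.Approaches a b := by
  have hprobe := h.isRightAngleProbe hO
  obtain ⟨⟨-, ⟨τ, hapex⟩, s, hs, hhit⟩, -⟩ := h
  have hτ : τ < 0 := by
    by_contra! hτ
    refine hprobe.apex_notMem ((convex_convexHull ℝ _).segment_subset ha hhit ?_)
    rw [mem_segment_iff_sameRay, add_sub_cancel_left, hapex, lineThrough, add_sub_cancel_left]
    exact ((SameRay.refl _).nonneg_smul_right hs).nonneg_smul_left hτ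
  rw [lineThrough_dir hab] at hapex
  obtain ⟨σ, hσ, ha_sub⟩ : ∃ σ : ℝ, 0 < σ ∧ a - o.apex = σ • (b - a) := by
    refine ⟨-τ * ‖b - a‖⁻¹, ?_, ?_⟩
    · have := norm_pos_iff.2 (sub_ne_zero.2 hab.symm)
      exact mul_pos (neg_pos.2 hτ) (by positivity)
    · rw [hapex, lineThrough]
      module
  have hinner := hprobe.inner_nonneg a ha
  have hcross := hprobe.cross_nonneg a ha
  rw [ha_sub, real_inner_smul_right] at hinner
  rw [ha_sub, map_smul, smul_eq_mul] at hcross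
  exact ⟨⟨σ, hσ, sub_eq_iff_eq_add'.1 ha_sub⟩, nonneg_of_mul_nonneg_right hinner hσ,
    nonneg_of_mul_nonneg_right hcross hσ⟩

namespace IsRightAngleProbe

lemma orient_nonneg_of_flush (ho : IsRightAngleProbe O o) (h : o.Flush a b) (hx : x ∈ O.body) :
    0 ≤ orient a b x := by
  obtain ⟨u, hu, ha, r, hr, hab⟩ := h
  have hside : 0 ≤ cross u (x - o.apex) := by
    rcases hu with rfl | rfl
    · exact ho.cross_nonneg x hx
    · rw [map_neg, LinearMap.neg_apply, planeOrientation.areaForm_rightAngleRotation_left, neg_neg]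
      exact ho.inner_nonneg x hx
  have hxa : x - a = (x - o.apex) - (a - o.apex) := by abel
  rw [orient, hab, map_smul, LinearMap.smul_apply, hxa, map_sub, ha, sub_zero]
  exact mul_nonneg hr.le hside

lemma ne_of_approaches (ho : IsRightAngleProbe O o) (h : o.Approaches a b) (ha : a ∈ O.body) :
    a ≠ b := by
  rintro rfl
  obtain ⟨σ, -, hσ⟩ := h.exists_eq
  rw [sub_self, smul_zero, add_zero] at hσ
  exact ho.apex_notMem (hσ ▸ ha)

lemma orient_p₁_neg_of_pos (ho : IsRightAngleProbe O o) (h : o.Approaches a b)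
    (hpos : 0 < cross o.dir (b - a)) : orient a b o.p₁ < 0 := by
  obtain ⟨σ, -, hσ⟩ := h.exists_eq
  obtain ⟨s, hs, hp⟩ := ho.exists_p₁_eq
  have hp' : o.p₁ - a = s • o.dir - σ • (b - a) := by
    rw [hp]
    linear_combination (norm := module) (-1 : ℝ) • hσ
  rw [orient, hp', map_sub, map_smul, map_smul, planeOrientation.areaForm_apply_self,
    planeOrientation.areaForm_swap, smul_zero, sub_zero, smul_eq_mul]
  exact mul_neg_of_pos_of_neg hs (neg_neg_of_pos hpos)

lemma orient_p₂_pos_of_pos (ho : IsRightAngleProbe O o) (h : o.Approaches a b)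
    (hpos : 0 < ⟪o.dir, b - a⟫) : 0 < orient a b o.p₂ := by
  obtain ⟨σ, -, hσ⟩ := h.exists_eq
  obtain ⟨t, ht, hp⟩ := ho.exists_p₂_eq
  have hp' : o.p₂ - a = t • J o.dir - σ • (b - a) := by
    rw [hp]
    linear_combination (norm := module) (-1 : ℝ) • hσ
  rw [orient, hp', map_sub, map_smul, map_smul, planeOrientation.areaForm_apply_self,
    planeOrientation.areaForm_rightAngleRotation_right, real_inner_comm, smul_zero, sub_zero,
    smul_eq_mul]
  exact mul_pos ht hpos

lemma orient_p₁_neg_or_flush (ho : IsRightAngleProbe O o) (h : o.Approaches a b)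
    (ha : a ∈ O.body) : orient a b o.p₁ < 0 ∨ o.Flush a b := by
  rcases h.cross_nonneg.lt_or_eq with hpos | hzero
  · exact Or.inl (ho.orient_p₁_neg_of_pos h hpos)
  have hdecomp := eq_inner_smul_add_areaForm_smul planeOrientation ho.norm_dir (b - a)
  rw [← hzero, zero_smul, add_zero] at hdecomp
  obtain ⟨σ, -, hσ⟩ := h.exists_eq
  refine Or.inr ⟨o.dir, Or.inl rfl, ?_, _, h.inner_nonneg.lt_of_ne fun h0 => ?_, hdecomp⟩
  · rw [sub_eq_iff_eq_add'.2 hσ, map_smul, ← hzero, smul_zero]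
  · rw [← h0, zero_smul, sub_eq_zero] at hdecomp
    exact ho.ne_of_approaches h ha hdecomp.symm

lemma orient_p₂_pos_or_flush (ho : IsRightAngleProbe O o) (h : o.Approaches a b)
    (ha : a ∈ O.body) : 0 < orient a b o.p₂ ∨ o.Flush b a := by
  rcases h.inner_nonneg.lt_or_eq with hpos | hzero
  · exact Or.inl (ho.orient_p₂_pos_of_pos h hpos)
  have hdecomp := eq_inner_smul_add_areaForm_smul planeOrientation ho.norm_dir (b - a)
  rw [← hzero, zero_smul, zero_add] at hdecomp
  obtain ⟨σ, -, hσ⟩ := h.exists_eq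
  refine Or.inr ⟨-J o.dir, Or.inr rfl, ?_, cross o.dir (b - a), h.cross_nonneg.lt_of_ne
    fun h0 => ?_, ?_⟩
  · have hb : b - o.apex = (1 + σ) • (b - a) := by linear_combination (norm := module) (1 : ℝ) • hσ
    rw [map_neg, LinearMap.neg_apply, planeOrientation.areaForm_rightAngleRotation_left, neg_neg,
      hb, real_inner_smul_right, ← hzero, mul_zero]
  · rw [← h0, zero_smul, sub_eq_zero] at hdecomp
    exact ho.ne_of_approaches h ha hdecomp.symm
  · rw [smul_neg, ← hdecomp, neg_sub]

lemma inner_sub_p₁_nonneg (ho : IsRightAngleProbe O o) (hx : x ∈ O.body) :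
    0 ≤ ⟪J o.dir, x - o.p₁⟫ := by
  obtain ⟨s, -, hs⟩ := ho.exists_p₁_eq
  rw [hs, ← sub_sub, planeOrientation.inner_rightAngleRotation_left, map_sub, map_smul,
    planeOrientation.areaForm_apply_self, smul_zero, sub_zero]
  exact ho.cross_nonneg x hx

lemma inner_sub_p₂_nonneg (ho : IsRightAngleProbe O o) (hx : x ∈ O.body) :
    0 ≤ ⟪o.dir, x - o.p₂⟫ := by
  obtain ⟨t, -, ht⟩ := ho.exists_p₂_eq
  rw [ht, ← sub_sub, inner_sub_right, real_inner_smul_right,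
    planeOrientation.inner_rightAngleRotation_right, planeOrientation.areaForm_apply_self, neg_zero,
    mul_zero, sub_zero]
  exact ho.inner_nonneg x hx

lemma p₁_ne_p₂ (ho : IsRightAngleProbe O o) (ho' : IsRightAngleProbe O o') (hO : O.IsObtuse)
    (h : 0 ≤ cross o'.dir o.dir) : o.p₁ ≠ o'.p₂ := by
  intro hp
  have ne_zero_of_norm {d : Plane} (hd : ‖d‖ = 1) : d ≠ 0 := norm_ne_zero_iff.1 (by simp [hd])
  have hacute : 0 < ⟪J o.dir, o'.dir⟫ :=
    hO.inner_pos ho.p₁_mem (ne_zero_of_norm (norm_quarter_turn ho.norm_dir))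
      (ne_zero_of_norm ho'.norm_dir)
      (fun x hx => ho.inner_sub_p₁_nonneg (O.mem_body_of_mem_verts hx))
      (fun x hx => hp ▸ ho'.inner_sub_p₂_nonneg (O.mem_body_of_mem_verts hx))
  rw [planeOrientation.inner_rightAngleRotation_left, planeOrientation.areaForm_swap] at hacute
  linarith

lemma turn_of_approaches (ho : IsRightAngleProbe O o) (ho' : IsRightAngleProbe O o')
    (h : o'.Approaches o.p₁ b) (hb : 0 < cross o.dir (b - o.p₁)) :
    0 < cross o.dir o'.dir ∧ 0 < ⟪o.dir, o'.dir⟫ := by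
  have hapex : cross o.dir (o'.apex - o.apex) < 0 := by
    obtain ⟨σ, hσ, hp₁⟩ := h.exists_eq
    obtain ⟨s, -, hs⟩ := ho.exists_p₁_eq
    have hsub : o'.apex - o.apex = s • o.dir - σ • (b - o.p₁) := by
      linear_combination (norm := module) hs - hp₁
    rw [hsub, map_sub, map_smul, map_smul, planeOrientation.areaForm_apply_self, smul_zero,
      zero_sub, smul_eq_mul]
    exact neg_neg_of_pos (mul_pos hσ hb)
  have hp₁ := ho.cross_nonneg _ (O.mem_body_of_mem_verts ho'.p₁_mem)
  have hp₂ := ho.cross_nonneg _ (O.mem_body_of_mem_verts ho'.p₂_mem)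
  obtain ⟨s, hs, hs'⟩ := ho'.exists_p₁_eq
  obtain ⟨t, ht, ht'⟩ := ho'.exists_p₂_eq
  rw [hs', add_sub_right_comm, map_add, map_smul, smul_eq_mul] at hp₁
  rw [ht', add_sub_right_comm, map_add, map_smul, smul_eq_mul,
    planeOrientation.areaForm_rightAngleRotation_right] at hp₂
  exact ⟨pos_of_mul_pos_right (by linarith) hs.le, pos_of_mul_pos_right (by linarith) ht.le⟩

end IsRightAngleProbe

end Probes

/-- The outcomes of two probes, the second made from the first contact point of the first probe
towards its second contact point. -/
structure IsTwoProbeOpening (O : ConvexPolygon) (o₁ o₂ : Outcome) : Prop where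
  probe₁ : IsRightAngleProbe O o₁
  probe₂ : IsRightAngleProbe O o₂
  approaches₂ : o₂.Approaches o₁.p₁ o₁.p₂

/-- A two-probe opening continued by a third probe, made from the first contact point of the second
probe towards that of the first. -/
structure IsOpening (O : ConvexPolygon) (o₁ o₂ o₃ : Outcome) : Prop
    extends IsTwoProbeOpening O o₁ o₂ where
  probe₃ : IsRightAngleProbe O o₃
  approaches₃ : o₃.Approaches o₂.p₁ o₁.p₁

section Opening

variable {O : ConvexPolygon} {o₁ o₂ o₃ : Outcome}

namespace IsTwoProbeOpening

lemma p₁_ne_p₂ (h : IsTwoProbeOpening O o₁ o₂) : o₁.p₁ ≠ o₁.p₂ :=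
  h.probe₂.ne_of_approaches h.approaches₂ (O.mem_body_of_mem_verts h.probe₁.p₁_mem)

lemma turn₁₂ (h : IsTwoProbeOpening O o₁ o₂) :
    0 < cross o₁.dir o₂.dir ∧ 0 < ⟪o₁.dir, o₂.dir⟫ := by
  refine h.probe₁.turn_of_approaches h.probe₂ h.approaches₂ ?_
  obtain ⟨s, -, hs⟩ := h.probe₁.exists_p₁_eq
  obtain ⟨t, ht, ht'⟩ := h.probe₁.exists_p₂_eq
  rw [hs, ht', add_sub_add_left_eq_sub, map_sub, map_smul, map_smul,
    planeOrientation.areaForm_apply_self, planeOrientation.areaForm_rightAngleRotation_right,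
    real_inner_self_eq_norm_sq, h.probe₁.norm_dir]
  simpa using ht

lemma cross_dir₂_pos (h : IsTwoProbeOpening O o₁ o₂) : 0 < cross o₂.dir (o₁.p₂ - o₁.p₁) := by
  obtain ⟨hcross, hinner⟩ := h.turn₁₂
  obtain ⟨s, hs, hs'⟩ := h.probe₁.exists_p₁_eq
  obtain ⟨t, ht, ht'⟩ := h.probe₁.exists_p₂_eq
  rw [hs', ht', add_sub_add_left_eq_sub, map_sub, map_smul, map_smul,
    planeOrientation.areaForm_rightAngleRotation_right, planeOrientation.areaForm_swap, smul_neg,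
    sub_neg_eq_add, real_inner_comm]
  exact add_pos (mul_pos ht hinner) (mul_pos hs hcross)

lemma orient_second_p₁_neg (h : IsTwoProbeOpening O o₁ o₂) : orient o₁.p₁ o₁.p₂ o₂.p₁ < 0 :=
  h.probe₂.orient_p₁_neg_of_pos h.approaches₂ h.cross_dir₂_pos

lemma first_p₁_ne_second_p₁ (h : IsTwoProbeOpening O o₁ o₂) : o₁.p₁ ≠ o₂.p₁ := fun e =>
  h.orient_second_p₁_neg.ne (e ▸ orient_self_left _ _)

end IsTwoProbeOpening

namespace IsOpening

lemma turn₂₃ (h : IsOpening O o₁ o₂ o₃) :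
    0 < cross o₂.dir o₃.dir ∧ 0 < ⟪o₂.dir, o₃.dir⟫ := by
  refine h.probe₂.turn_of_approaches h.probe₃ h.approaches₃ ?_
  obtain ⟨σ, hσ, hp₁⟩ := h.approaches₂.exists_eq
  obtain ⟨s, -, hs⟩ := h.probe₂.exists_p₁_eq
  have hsub : o₁.p₁ - o₂.p₁ = σ • (o₁.p₂ - o₁.p₁) - s • o₂.dir := by
    linear_combination (norm := module) hp₁ - hs
  rw [hsub, map_sub, map_smul, map_smul, planeOrientation.areaForm_apply_self, smul_zero, sub_zero]
  exact mul_pos hσ h.cross_dir₂_pos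

lemma cross_dir₁_dir₃_pos (h : IsOpening O o₁ o₂ o₃) : 0 < cross o₁.dir o₃.dir := by
  refine areaForm_pos_trans planeOrientation (n := o₂.dir) ?_ ?_ h.turn₂₃.2 h.turn₁₂.1 h.turn₂₃.1
  · rw [real_inner_comm]
    exact h.turn₁₂.2
  · rw [real_inner_self_eq_norm_sq, h.probe₂.norm_dir]
    norm_num

lemma orient_third_p₁_neg (h : IsOpening O o₁ o₂ o₃) : orient o₂.p₁ o₁.p₁ o₃.p₁ < 0 := by
  refine (h.probe₃.orient_p₁_neg_or_flush h.approaches₃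
    (O.mem_body_of_mem_verts h.probe₂.p₁_mem)).resolve_right fun hflush => ?_
  have hleft := h.probe₃.orient_nonneg_of_flush hflush (O.mem_body_of_mem_verts h.probe₁.p₂_mem)
  rw [← orient_rotate] at hleft
  exact h.orient_second_p₁_neg.not_ge hleft

/-- The four contact points of the opening which are distinct in any case; the other two may
coincide with some of these. -/
def fourVerts (o₁ o₂ o₃ : Outcome) : Finset Plane :=
  {o₁.p₁, o₁.p₂, o₂.p₁, o₃.p₁}

lemma card_fourVerts (h : IsOpening O o₁ o₂ o₃) (hO : O.IsObtuse) :
    (fourVerts o₁ o₂ o₃).card = 4 := by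
  have hneg₂ := h.orient_second_p₁_neg
  have hneg₃ := h.orient_third_p₁_neg
  have hx₂ : o₁.p₂ ≠ o₂.p₁ := fun e => hneg₂.ne (e ▸ orient_self_right _ _)
  have hy₁ : o₁.p₁ ≠ o₃.p₁ := fun e => hneg₃.ne (e ▸ orient_self_right _ _)
  have hy₂ : o₁.p₂ ≠ o₃.p₁ := (h.probe₃.p₁_ne_p₂ h.probe₁ hO h.cross_dir₁_dir₃_pos.le).symm
  have hy₃ : o₂.p₁ ≠ o₃.p₁ := fun e => hneg₃.ne (e ▸ orient_self_left _ _)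
  exact Finset.card_eq_four.2 ⟨_, _, _, _, h.p₁_ne_p₂, h.first_p₁_ne_second_p₁,
    hy₁, hx₂, hy₂, hy₃, rfl⟩

lemma second_p₂_notMem_fourVerts (h : IsOpening O o₁ o₂ o₃) (hO : O.IsObtuse)
    (hpos : 0 < orient o₁.p₁ o₁.p₂ o₂.p₂) : o₂.p₂ ∉ fourVerts o₁ o₂ o₃ := by
  simp only [fourVerts, Finset.mem_insert, Finset.mem_singleton]
  rintro (e | e | e | e)
  · exact hpos.ne' (e ▸ orient_self_left _ _)
  · exact hpos.ne' (e ▸ orient_self_right _ _)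
  · exact hpos.not_gt (e ▸ h.orient_second_p₁_neg)
  · exact h.probe₃.p₁_ne_p₂ h.probe₂ hO h.turn₂₃.1.le e.symm

lemma third_p₂_notMem_fourVerts (h : IsOpening O o₁ o₂ o₃)
    (hpos : 0 < orient o₂.p₁ o₁.p₁ o₃.p₂) : o₃.p₂ ∉ fourVerts o₁ o₂ o₃ := by
  simp only [fourVerts, Finset.mem_insert, Finset.mem_singleton]
  rintro (e | e | e | e)
  · exact hpos.ne' (e ▸ orient_self_right _ _)
  · have hneg := h.orient_second_p₁_neg
    rw [orient_rotate, ← e] at hneg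
    exact hpos.not_gt hneg
  · exact hpos.ne' (e ▸ orient_self_left _ _)
  · exact hpos.not_gt (e ▸ h.orient_third_p₁_neg)

lemma second_p₂_ne_third_p₂ (h : IsOpening O o₁ o₂ o₃) (hpos₂ : 0 < orient o₁.p₁ o₁.p₂ o₂.p₂)
    (hpos₃ : 0 < orient o₂.p₁ o₁.p₁ o₃.p₂) : o₂.p₂ ≠ o₃.p₂ := by
  intro e
  rw [← e, ← orient_rotate] at hpos₃
  have hneg := h.orient_second_p₁_neg
  exact hneg.not_gt (O.orient_pos_trans h.probe₁.p₁_mem h.probe₁.p₂_mem h.probe₂.p₂_mem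
    h.probe₂.p₁_mem hpos₂ hpos₃ h.first_p₁_ne_second_p₁.symm)

end IsOpening

end Opening

section Transcripts

/-- The vertices found so far: all contact points of the given answers. -/
def knownVerts (l : List Answer) : Finset Plane :=
  (l.reduceOption.flatMap fun o => [o.p₁, o.p₂]).toFinset

open scoped Classical in
/-- The directed edges verified so far: pairs of known vertices flush with an arm of a probe. -/
def verifiedEdges (l : List Answer) : Finset (Plane × Plane) :=
  (knownVerts l).offDiag.filter fun e => ∃ o ∈ l.reduceOption, o.Flush e.1 e.2

/-- Known vertices and verified edges together; the number of findings measures the progress. -/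
def findings (l : List Answer) : Finset (Plane ⊕ Plane × Plane) :=
  (knownVerts l).disjSum (verifiedEdges l)

/-- Every answer is the outcome of a probe of `O`. -/
def IsTranscript (O : ConvexPolygon) (l : List Answer) : Prop :=
  ∀ a ∈ l, ∃ o, a = some o ∧ IsRightAngleProbe O o

variable {O : ConvexPolygon} {l l' : List Answer} {o : Outcome} {a b x : Plane}

lemma mem_knownVerts : x ∈ knownVerts l ↔ ∃ o, some o ∈ l ∧ (x = o.p₁ ∨ x = o.p₂) := by
  simp [knownVerts, List.reduceOption_mem_iff]

lemma p₁_mem_knownVerts (h : some o ∈ l) : o.p₁ ∈ knownVerts l :=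
  mem_knownVerts.2 ⟨o, h, Or.inl rfl⟩

lemma p₂_mem_knownVerts (h : some o ∈ l) : o.p₂ ∈ knownVerts l :=
  mem_knownVerts.2 ⟨o, h, Or.inr rfl⟩

lemma mem_verifiedEdges : (a, b) ∈ verifiedEdges l ↔
    (a ∈ knownVerts l ∧ b ∈ knownVerts l ∧ a ≠ b) ∧ ∃ o, some o ∈ l ∧ o.Flush a b := by
  simp only [verifiedEdges, Finset.mem_filter, Finset.mem_offDiag, List.reduceOption_mem_iff]

lemma knownVerts_mono (h : l ⊆ l') : knownVerts l ⊆ knownVerts l' := fun x hx => by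
  obtain ⟨o, ho, hxo⟩ := mem_knownVerts.1 hx
  exact mem_knownVerts.2 ⟨o, h ho, hxo⟩

lemma findings_mono (h : l ⊆ l') : findings l ⊆ findings l' := by
  refine Finset.disjSum_mono (knownVerts_mono h) fun ⟨a, b⟩ hab => ?_
  obtain ⟨⟨ha, hb, hne⟩, o, ho, hflush⟩ := mem_verifiedEdges.1 hab
  exact mem_verifiedEdges.2 ⟨⟨knownVerts_mono h ha, knownVerts_mono h hb, hne⟩, o, h ho, hflush⟩

namespace IsTranscript

lemma probe (h : IsTranscript O l) (ho : some o ∈ l) : IsRightAngleProbe O o := by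
  obtain ⟨_, ⟨⟩, hprobe⟩ := h _ ho
  exact hprobe

lemma knownVerts_subset (h : IsTranscript O l) : knownVerts l ⊆ O.verts := fun x hx => by
  obtain ⟨o, ho, rfl | rfl⟩ := mem_knownVerts.1 hx
  · exact (h.probe ho).p₁_mem
  · exact (h.probe ho).p₂_mem

lemma knownVerts_nontrivial (h : IsTranscript O l) (hO : O.IsObtuse) (hl : l ≠ []) :
    (knownVerts l).Nontrivial := by
  obtain ⟨a, ha⟩ := List.exists_mem_of_ne_nil l hl
  obtain ⟨o, rfl, ho⟩ := h a ha
  exact ⟨o.p₁, p₁_mem_knownVerts ha, o.p₂, p₂_mem_knownVerts ha,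
    ho.p₁_ne_p₂ ho hO (planeOrientation.areaForm_apply_self _).ge⟩

lemma verifiedEdges_subset (h : IsTranscript O l) : verifiedEdges l ⊆ hullEdges O.verts :=
  fun ⟨a, b⟩ hab => by
    obtain ⟨⟨ha, hb, hne⟩, o, ho, hflush⟩ := mem_verifiedEdges.1 hab
    exact mem_hullEdges.2 ⟨⟨h.knownVerts_subset ha, h.knownVerts_subset hb, hne⟩, fun v hv =>
      (h.probe ho).orient_nonneg_of_flush hflush (O.mem_body_of_mem_verts hv)⟩

lemma findings_subset (h : IsTranscript O l) :
    findings l ⊆ O.verts.disjSum (hullEdges O.verts) :=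
  Finset.disjSum_mono h.knownVerts_subset h.verifiedEdges_subset

lemma knownVerts_eq_verts (h : IsTranscript O l) (hO : O.IsObtuse) (hl : l ≠ [])
    (hgap : hullEdges (knownVerts l) ⊆ verifiedEdges l) : knownVerts l = O.verts :=
  O.eq_verts_of_hullEdges_subset h.knownVerts_subset (h.knownVerts_nontrivial hO hl)
    (hgap.trans h.verifiedEdges_subset)

lemma hullEdges_subset_verifiedEdges (h : IsTranscript O l)
    (hcard : 2 * O.verts.card ≤ (findings l).card) :
    hullEdges (knownVerts l) ⊆ verifiedEdges l := by
  have hall : findings l = O.verts.disjSum (hullEdges O.verts) := by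
    refine Finset.eq_of_subset_of_card_le h.findings_subset (le_trans ?_ hcard)
    rw [Finset.card_disjSum, two_mul]
    exact Nat.add_le_add_left O.card_hullEdges_verts_le _
  obtain ⟨hverts, hedges⟩ := Finset.disjSum_inj.1 hall
  rw [hverts, hedges]

lemma findings_ssubset (h : IsTranscript O l) (hab : (a, b) ∈ hullEdges (knownVerts l))
    (hgap : (a, b) ∉ verifiedEdges l) (ho : IsRightAngleProbe O o) (happr : o.Approaches a b) :
    findings l ⊂ findings (l ++ [some o]) := by
  have hmono : l ⊆ l ++ [some o] := List.subset_append_left l _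
  have hmem : some o ∈ l ++ [some o] := by simp
  obtain ⟨⟨ha, hb, hne⟩, hleft⟩ := mem_hullEdges.1 hab
  refine (Finset.ssubset_iff_of_subset (findings_mono hmono)).2 ?_
  rcases ho.orient_p₁_neg_or_flush happr (O.mem_body_of_mem_verts (h.knownVerts_subset ha))
    with hneg | hflush
  · exact ⟨Sum.inl o.p₁, Finset.inl_mem_disjSum.2 (p₁_mem_knownVerts hmem),
      fun hmem => hneg.not_ge (hleft _ (Finset.inl_mem_disjSum.1 hmem))⟩
  · exact ⟨Sum.inr (a, b), Finset.inr_mem_disjSum.2 (mem_verifiedEdges.2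
      ⟨⟨knownVerts_mono hmono ha, knownVerts_mono hmono hb, hne⟩, o, hmem, hflush⟩),
      fun hmem => hgap (Finset.inr_mem_disjSum.1 hmem)⟩

end IsTranscript

section Opening

variable {o₁ o₂ o₃ : Outcome}

lemma IsOpening.second_p₂_notMem_or_mem_verifiedEdges (h : IsOpening O o₁ o₂ o₃) (hO : O.IsObtuse)
    (h₁ : some o₁ ∈ l) (h₂ : some o₂ ∈ l) :
    (0 < orient o₁.p₁ o₁.p₂ o₂.p₂ ∧ o₂.p₂ ∉ fourVerts o₁ o₂ o₃) ∨
      (o₁.p₂, o₁.p₁) ∈ verifiedEdges l := by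
  refine (h.probe₂.orient_p₂_pos_or_flush h.approaches₂
    (O.mem_body_of_mem_verts h.probe₁.p₁_mem)).imp
    (fun hpos => ⟨hpos, h.second_p₂_notMem_fourVerts hO hpos⟩) fun hflush => ?_
  exact mem_verifiedEdges.2 ⟨⟨p₂_mem_knownVerts h₁, p₁_mem_knownVerts h₁, h.p₁_ne_p₂.symm⟩,
    o₂, h₂, hflush⟩

lemma IsOpening.third_p₂_notMem_or_mem_verifiedEdges (h : IsOpening O o₁ o₂ o₃)
    (h₁ : some o₁ ∈ l) (h₂ : some o₂ ∈ l) (h₃ : some o₃ ∈ l) :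
    (0 < orient o₂.p₁ o₁.p₁ o₃.p₂ ∧ o₃.p₂ ∉ fourVerts o₁ o₂ o₃) ∨
      (o₁.p₁, o₂.p₁) ∈ verifiedEdges l := by
  refine (h.probe₃.orient_p₂_pos_or_flush h.approaches₃
    (O.mem_body_of_mem_verts h.probe₂.p₁_mem)).imp
    (fun hpos => ⟨hpos, h.third_p₂_notMem_fourVerts hpos⟩) fun hflush => ?_
  exact mem_verifiedEdges.2 ⟨⟨p₁_mem_knownVerts h₁, p₁_mem_knownVerts h₂,
    h.first_p₁_ne_second_p₁⟩, o₃, h₃, hflush⟩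

lemma IsOpening.fourVerts_subset_knownVerts (h₁ : some o₁ ∈ l) (h₂ : some o₂ ∈ l)
    (h₃ : some o₃ ∈ l) : fourVerts o₁ o₂ o₃ ⊆ knownVerts l := by
  simp [fourVerts, Finset.insert_subset_iff, p₁_mem_knownVerts, p₂_mem_knownVerts, *]

lemma IsOpening.six_le_card_findings (h : IsOpening O o₁ o₂ o₃) (hO : O.IsObtuse)
    (h₁ : some o₁ ∈ l) (h₂ : some o₂ ∈ l) (h₃ : some o₃ ∈ l) : 6 ≤ (findings l).card := by
  classical
  have four_subset := fourVerts_subset_knownVerts h₁ h₂ h₃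
  have p₂_mem₂ := p₂_mem_knownVerts h₂
  have p₂_mem₃ := p₂_mem_knownVerts h₃
  have edge_ne : (o₁.p₂, o₁.p₁) ≠ (o₁.p₁, o₂.p₁) := fun e => h.p₁_ne_p₂ (Prod.ext_iff.1 e).1.symm
  obtain ⟨V, E, hV, hE, hcard⟩ : ∃ V E, V ⊆ knownVerts l ∧ E ⊆ verifiedEdges l ∧
      6 ≤ V.card + E.card := by
    rcases h.second_p₂_notMem_or_mem_verifiedEdges hO h₁ h₂ with ⟨hpos₂, hnew₂⟩ | hedge₂ <;>
      rcases h.third_p₂_notMem_or_mem_verifiedEdges h₁ h₂ h₃ with ⟨hpos₃, hnew₃⟩ | hedge₃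
    · have hne := h.second_p₂_ne_third_p₂ hpos₂ hpos₃
      refine ⟨insert o₂.p₂ (insert o₃.p₂ (fourVerts o₁ o₂ o₃)), ∅, ?_, Finset.empty_subset _, ?_⟩
      · simp [Finset.insert_subset_iff, *]
      · simp [Finset.card_insert_of_notMem, h.card_fourVerts hO, *]
    · refine ⟨insert o₂.p₂ (fourVerts o₁ o₂ o₃), {(o₁.p₁, o₂.p₁)}, ?_, ?_, ?_⟩
      · simp [Finset.insert_subset_iff, *]
      · simpa using hedge₃
      · simp [Finset.card_insert_of_notMem, h.card_fourVerts hO, *]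
    · refine ⟨insert o₃.p₂ (fourVerts o₁ o₂ o₃), {(o₁.p₂, o₁.p₁)}, ?_, ?_, ?_⟩
      · simp [Finset.insert_subset_iff, *]
      · simpa using hedge₂
      · simp [Finset.card_insert_of_notMem, h.card_fourVerts hO, *]
    · refine ⟨fourVerts o₁ o₂ o₃, {(o₁.p₂, o₁.p₁), (o₁.p₁, o₂.p₁)}, four_subset, ?_, ?_⟩
      · simp [Finset.insert_subset_iff, *]
      · rw [h.card_fourVerts hO, Finset.card_pair edge_ne]
  rw [findings, Finset.card_disjSum]
  exact hcard.trans (add_le_add (Finset.card_le_card hV) (Finset.card_le_card hE))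

end Opening

end Transcripts

section Strategy

open scoped Classical in
/-- The move after the opening: probe along some unverified edge of the hull of the known vertices,
and output this hull when there is none left. The last query is a default value, never used. -/
def refineStep (p : Plane) (l : List Answer) : DirLine ⊕ ConvexPolygon :=
  if hgap : ∃ e ∈ hullEdges (knownVerts l), e ∉ verifiedEdges l then
    Sum.inl (lineThrough hgap.choose.1 hgap.choose.2)
  else if hP : ∃ P : ConvexPolygon, P.verts = knownVerts l then Sum.inr hP.choose
  else Sum.inl (lineThrough p p)

/-- The probing strategy: three opening queries, the first of them through the given point `p` of
the polygon, and `refineStep` from then on. -/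
def strategy (p : Plane) : Strategy
  | [] => Sum.inl (lineThrough p p)
  | [some o₁] => Sum.inl (lineThrough o₁.p₁ o₁.p₂)
  | [some o₁, some o₂] => Sum.inl (lineThrough o₂.p₁ o₁.p₁)
  | l => refineStep p l

variable {ω : ℝ} {S : Strategy} {O P : ConvexPolygon} {L : DirLine} {p : Plane} {a : Answer}
  {l : List Answer}

lemma refineStep_eq_inr (h : refineStep p l = Sum.inr P) :
    P.verts = knownVerts l ∧ hullEdges (knownVerts l) ⊆ verifiedEdges l := by
  unfold refineStep at h
  split_ifs at h with hgap hP
  push Not at hgap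
  rw [← Sum.inr_injective h]
  exact ⟨hP.choose_spec, hgap⟩

lemma refineStep_eq_inl (h : refineStep p l = Sum.inl L) (hl : IsTranscript O l)
    (hO : O.IsObtuse) (hne : l ≠ []) : ∃ a b, (a, b) ∈ hullEdges (knownVerts l) ∧
      (a, b) ∉ verifiedEdges l ∧ L = lineThrough a b := by
  unfold refineStep at h
  split_ifs at h with hgap hP
  · exact ⟨hgap.choose.1, hgap.choose.2, hgap.choose_spec.1, hgap.choose_spec.2,
      (Sum.inl_injective h).symm⟩
  · push Not at hgap
    exact absurd ⟨O, (hl.knownVerts_eq_verts hO hne hgap).symm⟩ hP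

lemma strategy_eq_refineStep (hl : 3 ≤ l.length) : strategy p l = refineStep p l := by
  unfold strategy
  split
  case h_4 => rfl
  all_goals simp at hl

lemma strategy_eq_inr (h : strategy p l = Sum.inr P) :
    l ≠ [] ∧ P.verts = knownVerts l ∧ hullEdges (knownVerts l) ⊆ verifiedEdges l := by
  unfold strategy at h
  split at h
  case h_4 hne _ _ => exact ⟨hne, refineStep_eq_inr h⟩
  all_goals contradiction

lemma pt_mem_body_of_strategy_eq_inl (hp : p ∈ O.body) (hO : O.IsObtuse) (hl : IsTranscript O l)
    (h : strategy p l = Sum.inl L) : L.pt ∈ O.body := by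
  unfold strategy at h
  split at h
  case h_1 =>
    rw [← Sum.inl_injective h]
    exact hp
  case h_2 o₁ =>
    rw [← Sum.inl_injective h]
    exact O.mem_body_of_mem_verts (hl.probe (o := o₁) (by simp)).p₁_mem
  case h_3 o₁ o₂ =>
    rw [← Sum.inl_injective h]
    exact O.mem_body_of_mem_verts (hl.probe (o := o₂) (by simp)).p₁_mem
  case h_4 hne _ _ =>
    obtain ⟨a, b, hab, -, rfl⟩ := refineStep_eq_inl h hl hO hne
    exact O.mem_body_of_mem_verts (hl.knownVerts_subset (mem_hullEdges.1 hab).1.1)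

lemma ValidAnswer.exists_isOutcome (h : ValidAnswer (π / 2) O L a) (hL : L.pt ∈ O.body) :
    ∃ o, a = some o ∧ IsOutcome (π / 2) O L o := by
  match a with
  | none => exact absurd (O.exists_isValidProbeAlong hL) h
  | some o => exact ⟨o, rfl, h⟩

lemma Consistent.of_concat (h : Consistent ω S O (l ++ [a])) :
    Consistent ω S O l ∧ ∃ L, S l = Sum.inl L ∧ ValidAnswer ω O L a := by
  refine ⟨fun i hi => ?_, ?_⟩
  · have := h i (by simp; omega)
    simpa [List.take_append_of_le_length hi.le, List.getElem_append_left hi] using this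
  · simpa using h l.length (by simp)

lemma Consistent.isTranscript (hp : p ∈ O.body) (hO : O.IsObtuse)
    (h : Consistent (π / 2) (strategy p) O l) : IsTranscript O l := by
  induction l using List.reverseRecOn with
  | nil => simp [IsTranscript]
  | append_singleton l a ih =>
    obtain ⟨hl, L, hL, ha⟩ := h.of_concat
    obtain ⟨o, rfl, ho⟩ := ha.exists_isOutcome (pt_mem_body_of_strategy_eq_inl hp hO (ih hl) hL)
    intro b hb
    rcases List.mem_append.1 hb with hb | hb
    · exact ih hl b hb
    · exact ⟨o, List.mem_singleton.1 hb, ho.isRightAngleProbe hO⟩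

lemma Consistent.exists_isOutcome (hp : p ∈ O.body) (hO : O.IsObtuse)
    (h : Consistent (π / 2) (strategy p) O (l ++ [a])) :
    ∃ L o, strategy p l = Sum.inl L ∧ a = some o ∧ IsOutcome (π / 2) O L o := by
  obtain ⟨hl, L, hL, ha⟩ := h.of_concat
  obtain ⟨o, hao, ho⟩ :=
    ha.exists_isOutcome (pt_mem_body_of_strategy_eq_inl hp hO (hl.isTranscript hp hO) hL)
  exact ⟨L, o, hL, hao, ho⟩

lemma Consistent.exists_isOpening (hp : p ∈ O.body) (hO : O.IsObtuse) {a₁ a₂ a₃ : Answer}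
    (h : Consistent (π / 2) (strategy p) O [a₁, a₂, a₃]) :
    ∃ o₁ o₂ o₃, [a₁, a₂, a₃] = [some o₁, some o₂, some o₃] ∧ IsOpening O o₁ o₂ o₃ := by
  have h₂ : Consistent (π / 2) (strategy p) O [a₁, a₂] := (h.of_concat (l := [a₁, a₂])).1
  have h₁ : Consistent (π / 2) (strategy p) O [a₁] := (h₂.of_concat (l := [a₁])).1
  obtain ⟨_, o₁, -, rfl, ho₁⟩ := h₁.exists_isOutcome (l := []) hp hO
  obtain ⟨_, o₂, ⟨⟩, rfl, ho₂⟩ := h₂.exists_isOutcome (l := [some o₁]) hp hO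
  obtain ⟨_, o₃, ⟨⟩, rfl, ho₃⟩ := h.exists_isOutcome (l := [some o₁, some o₂]) hp hO
  have probe₁ := ho₁.isRightAngleProbe hO
  have probe₂ := ho₂.isRightAngleProbe hO
  have opening₂ : IsTwoProbeOpening O o₁ o₂ := ⟨probe₁, probe₂,
    ho₂.approaches hO (O.mem_body_of_mem_verts probe₁.p₁_mem)
      (probe₁.p₁_ne_p₂ probe₁ hO (planeOrientation.areaForm_apply_self _).ge)⟩
  exact ⟨o₁, o₂, o₃, rfl, opening₂, ho₃.isRightAngleProbe hO,
    ho₃.approaches hO (O.mem_body_of_mem_verts probe₂.p₁_mem) opening₂.first_p₁_ne_second_p₁.symm⟩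

lemma Consistent.length_add_three_le_card_findings (hp : p ∈ O.body) (hO : O.IsObtuse)
    (h : Consistent (π / 2) (strategy p) O l) (hlen : 3 ≤ l.length) :
    l.length + 3 ≤ (findings l).card := by
  induction l using List.reverseRecOn with
  | nil => simp at hlen
  | append_singleton l a ih =>
    rcases hlen.eq_or_lt with hthree | hfour
    · obtain ⟨a₁, a₂, a₃, hl⟩ := List.length_eq_three.1 hthree.symm
      rw [← hthree]
      rw [hl] at h ⊢
      obtain ⟨o₁, o₂, o₃, heq, hopening⟩ := h.exists_isOpening hp hO
      rw [heq]
      exact hopening.six_le_card_findings hO (by simp) (by simp) (by simp)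
    · rw [List.length_append, List.length_singleton] at hfour ⊢
      obtain ⟨L, o, hL, rfl, ho⟩ := h.exists_isOutcome hp hO
      have hl := h.of_concat.1
      have htr := hl.isTranscript hp hO
      rw [strategy_eq_refineStep (Nat.le_of_lt_succ hfour)] at hL
      obtain ⟨b, c, hbc, hgap, rfl⟩ :=
        refineStep_eq_inl hL htr hO (List.ne_nil_of_length_pos (by omega))
      obtain ⟨⟨hb, -, hne⟩, -⟩ := mem_hullEdges.1 hbc
      have hgrow := htr.findings_ssubset hbc hgap (ho.isRightAngleProbe hO)
        (ho.approaches hO (O.mem_body_of_mem_verts (htr.knownVerts_subset hb)) hne)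
      have := ih hl (Nat.le_of_lt_succ hfour)
      have := Finset.card_lt_card hgrow
      omega

lemma Consistent.verts_eq_of_strategy_eq_inr (hp : p ∈ O.body) (hO : O.IsObtuse)
    (h : Consistent (π / 2) (strategy p) O l) (hP : strategy p l = Sum.inr P) :
    P.verts = O.verts := by
  obtain ⟨hne, hverts, hgap⟩ := strategy_eq_inr hP
  rw [hverts, (h.isTranscript hp hO).knownVerts_eq_verts hO hne hgap]

lemma Consistent.exists_strategy_eq_inr (hp : p ∈ O.body) (hO : O.IsObtuse)
    (h : Consistent (π / 2) (strategy p) O l) (hlen : l.length = 2 * O.verts.card - 3) :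
    ∃ P, strategy p l = Sum.inr P := by
  have hn := O.three_le_card
  have hcard := h.length_add_three_le_card_findings hp hO (by omega)
  have htr := h.isTranscript hp hO
  rw [strategy_eq_refineStep (by omega)]
  cases hL : refineStep p l with
  | inr P => exact ⟨P, rfl⟩
  | inl L =>
    obtain ⟨a, b, hab, hgap, -⟩ :=
      refineStep_eq_inl hL htr hO (List.ne_nil_of_length_pos (by omega))
    exact absurd (htr.hullEdges_subset_verifiedEdges (by omega) hab) hgap

end Strategy

end Plane

theorem reconstruct_no_narrow_right_angle_general (p : Plane) :
    ∃ S : Strategy, ∀ O : ConvexPolygon, p ∈ O.body →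
      (∀ v ∈ O.verts, Real.pi / 2 < O.intAngle v) →
      Reconstructs (Real.pi / 2) S O (2 * O.verts.card - 3) := by
  refine ⟨strategy p, fun O hp hangle => ?_⟩
  have hO := O.isObtuse_of_pi_div_two_lt_intAngle hangle
  exact ⟨fun l hl P => hl.verts_eq_of_strategy_eq_inr hp hO,
    fun l hl => hl.exists_strategy_eq_inr hp hO⟩

/-- for `ω = π/2`, there is a strategy reconstructing every convex polygon
without narrow vertices, contained in `Ψ` and containing `p`, using at most `2n - 3` probes. -/
theorem reconstruct_no_narrow_right_angle (c : Plane) (r : ℝ) (hr : 0 < r) (p : Plane) :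
    ∃ S : Strategy, ∀ O : ConvexPolygon,
      p ∈ O.body → O.body ⊆ Metric.closedBall c r →
      (∀ v ∈ O.verts, Real.pi / 2 < O.intAngle v) →
      Reconstructs (Real.pi / 2) S O (2 * O.verts.card - 3) := by
  obtain ⟨S, hS⟩ := reconstruct_no_narrow_right_angle_general p
  exact ⟨S, fun O hp _ hangle => hS O hp hangle⟩

end
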